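/- Let R : [0,T] × ℝⁿ × ℝ → ℝ and G : ℝⁿ → ℝ, and let v_s = (x_s, u_s) and v_{s+1} = (x_{s+1}, u_{s+1}) be two processes of the system x' = f(t,x,u), x(0) = x₀. Suppose: (i) R(t, x_s(t), u_s(t)) = min_x R(t, x, u_s(t)) for all t ∈ (0,T); (ii) G(x_s(T)) = max_x G(x); (iii) u_{s+1}(t) ∈ Argmax_u R(t, x_{s+1}(t), u) for all t. If I and L coincide on admissible processes with L(x;u) = −∫₀ᵀ R(t,x(t),u(t)) dt + G(x(T)), then I(v_s) − I(v_{s+1}) = ∫₀ᵀ [R(t, x_{s+1}, u_{s+1}) − R(t, x_{s+1}, u_s)] dt + ∫₀ᵀ [R(t, x_{s+1}, u_s) − R(t, x_s, u_s)] dt + G(x_s(T)) − G(x_{s+1}(T)), and this quantity is nonnegative; hence the global improvement step does not increase the cost functional. -/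

import Mathlib

open Set intervalIntegral

section KrotovFunctional

variable {X U : Type*} {R : ℝ → X → U → ℝ} {G : X → ℝ} {a b : ℝ} {x x₁ : ℝ → X} {u u₁ : ℝ → U}

/-- The functional `L(x;u) = −∫ₐᵇ R(t,x(t),u(t)) dt + G(x(b))` into which the Krotov transformation
turns a cost functional. It makes sense without reference to a control system; the integral
takes its junk value `0` when the integrand is not interval integrable. -/
noncomputable def krotovFunctional (R : ℝ → X → U → ℝ) (G : X → ℝ) (a b : ℝ)
    (x : ℝ → X) (u : ℝ → U) : ℝ :=
  -(∫ t in a..b, R t (x t) (u t)) + G (x b)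

theorem krotovFunctional_sub_eq_integral_add_integral
    (h₁₁ : IntervalIntegrable (fun t => R t (x₁ t) (u₁ t)) MeasureTheory.volume a b)
    (h₁ : IntervalIntegrable (fun t => R t (x₁ t) (u t)) MeasureTheory.volume a b)
    (h : IntervalIntegrable (fun t => R t (x t) (u t)) MeasureTheory.volume a b) :
    krotovFunctional R G a b x u - krotovFunctional R G a b x₁ u₁ =
      (∫ t in a..b, (R t (x₁ t) (u₁ t) - R t (x₁ t) (u t))) +
      (∫ t in a..b, (R t (x₁ t) (u t) - R t (x t) (u t))) +
      G (x b) - G (x₁ b) := by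
  rw [integral_sub h₁₁ h₁, integral_sub h₁ h, krotovFunctional, krotovFunctional]
  ring

theorem krotovFunctional_le_of_le (hab : a ≤ b)
    (h₁₁ : IntervalIntegrable (fun t => R t (x₁ t) (u₁ t)) MeasureTheory.volume a b)
    (h : IntervalIntegrable (fun t => R t (x t) (u t)) MeasureTheory.volume a b)
    (hR : ∀ t ∈ Ioo a b, R t (x t) (u t) ≤ R t (x₁ t) (u₁ t)) (hG : G (x₁ b) ≤ G (x b)) :
    krotovFunctional R G a b x₁ u₁ ≤ krotovFunctional R G a b x u :=
  add_le_add (neg_le_neg (integral_mono_on_of_le_Ioo hab h h₁₁ hR)) hG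

theorem global_improvement_step_nonneg_general {I : (ℝ → X) → (ℝ → U) → ℝ}
    {Admissible : (ℝ → X) → (ℝ → U) → Prop} (hab : a ≤ b)
    (hIL : ∀ x u, Admissible x u → I x u = krotovFunctional R G a b x u)
    (hadm : Admissible x u) (hadm₁ : Admissible x₁ u₁)
    (hstate : ∀ t ∈ Ioo a b, R t (x t) (u t) ≤ R t (x₁ t) (u t))
    (hterminal : G (x₁ b) ≤ G (x b))
    (hcontrol : ∀ t ∈ Ioo a b, R t (x₁ t) (u t) ≤ R t (x₁ t) (u₁ t))
    (h₁₁ : IntervalIntegrable (fun t => R t (x₁ t) (u₁ t)) MeasureTheory.volume a b)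
    (h₁ : IntervalIntegrable (fun t => R t (x₁ t) (u t)) MeasureTheory.volume a b)
    (h : IntervalIntegrable (fun t => R t (x t) (u t)) MeasureTheory.volume a b) :
    I x u - I x₁ u₁ =
      (∫ t in a..b, (R t (x₁ t) (u₁ t) - R t (x₁ t) (u t))) +
      (∫ t in a..b, (R t (x₁ t) (u t) - R t (x t) (u t))) +
      G (x b) - G (x₁ b) ∧
    0 ≤ I x u - I x₁ u₁ := by
  rw [hIL x u hadm, hIL x₁ u₁ hadm₁]
  have hR : ∀ t ∈ Ioo a b, R t (x t) (u t) ≤ R t (x₁ t) (u₁ t) := fun t ht =>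
    (hstate t ht).trans (hcontrol t ht)
  exact ⟨krotovFunctional_sub_eq_integral_add_integral h₁₁ h₁ h,
    sub_nonneg.2 (krotovFunctional_le_of_le hab h₁₁ h hR hterminal)⟩

end KrotovFunctional

/-- **improvement property of the global method.** Suppose the cost `I`
satisfies the Krotov representation `I(x;u) = −∫₀ᵀ R(t,x,u) dt + G(x(T))` on admissible
processes, `(x_s,u_s)` minimizes `x ↦ R(t,x,u_s(t))` pointwise and maximizes `G` at `x_s(T)`,
and `u_{s+1}(t)` maximizes `u ↦ R(t,x_{s+1}(t),u)`. Then the decrement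
`I(v_s) − I(v_{s+1})` equals the stated sum of integrals and terminal terms and is
nonnegative. -/
theorem global_improvement_step_nonneg
    {n : ℕ} (T : ℝ) (hT : 0 < T)
    (f : ℝ → EuclideanSpace ℝ (Fin n) → ℝ → EuclideanSpace ℝ (Fin n))
    (x₀ : EuclideanSpace ℝ (Fin n))
    (I : (ℝ → EuclideanSpace ℝ (Fin n)) → (ℝ → ℝ) → ℝ)
    (R : ℝ → EuclideanSpace ℝ (Fin n) → ℝ → ℝ)
    (G : EuclideanSpace ℝ (Fin n) → ℝ)
    (hIL : ∀ (x : ℝ → EuclideanSpace ℝ (Fin n)) (u : ℝ → ℝ),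
      ((∀ t ∈ Icc (0 : ℝ) T, HasDerivAt x (f t (x t) (u t)) t) ∧ x 0 = x₀) →
      I x u = -(∫ t in (0 : ℝ)..T, R t (x t) (u t)) + G (x T))
    (xs xs1 : ℝ → EuclideanSpace ℝ (Fin n)) (us us1 : ℝ → ℝ)
    (hsol_s : (∀ t ∈ Icc (0 : ℝ) T, HasDerivAt xs (f t (xs t) (us t)) t) ∧ xs 0 = x₀)
    (hsol_s1 : (∀ t ∈ Icc (0 : ℝ) T, HasDerivAt xs1 (f t (xs1 t) (us1 t)) t) ∧ xs1 0 = x₀)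
    -- (i): `x_s(t)` minimizes `x ↦ R(t, x, u_s(t))` for `t ∈ (0,T)`
    (hRmin : ∀ t ∈ Ioo (0 : ℝ) T, ∀ v, R t (xs t) (us t) ≤ R t v (us t))
    -- (ii): `x_s(T)` maximizes `G`
    (hGmax : ∀ v, G v ≤ G (xs T))
    -- (iii): `u_{s+1}(t)` maximizes `u ↦ R(t, x_{s+1}(t), u)` for all `t`
    (hUmax : ∀ t, ∀ a : ℝ, R t (xs1 t) a ≤ R t (xs1 t) (us1 t))
    (hint1 : IntervalIntegrable (fun t => R t (xs1 t) (us1 t)) MeasureTheory.volume 0 T)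
    (hint2 : IntervalIntegrable (fun t => R t (xs1 t) (us t)) MeasureTheory.volume 0 T)
    (hint3 : IntervalIntegrable (fun t => R t (xs t) (us t)) MeasureTheory.volume 0 T) :
    I xs us - I xs1 us1 =
      (∫ t in (0 : ℝ)..T, (R t (xs1 t) (us1 t) - R t (xs1 t) (us t))) +
      (∫ t in (0 : ℝ)..T, (R t (xs1 t) (us t) - R t (xs t) (us t))) +
      G (xs T) - G (xs1 T) ∧
    0 ≤ I xs us - I xs1 us1 := by
  exact global_improvement_step_nonneg_general hT.le hIL hsol_s hsol_s1
    (fun t ht => hRmin t ht (xs1 t)) (hGmax (xs1 T)) (fun t _ => hUmax t (us t)) hint1 hint2 hint3
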